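/- For every v ∈ H²₀(Ω) on a bounded open set Ω ⊂ ℝ², the gradient satisfies ‖∇v‖_{L⁴(Ω)} ≤ (|Ω|^{1/4}/π) ‖D²v‖_{L²(Ω)}. -/

import Mathlib

open MeasureTheory

noncomputable section

/-- Partial derivative `∂f/∂xᵢ`. -/
def pd (f : EuclideanSpace ℝ (Fin 2) → ℝ) (i : Fin 2) (x : EuclideanSpace ℝ (Fin 2)) : ℝ :=
  fderiv ℝ f x (EuclideanSpace.single i 1)

/-- Second partial derivative `∂²f/∂xᵢ∂xⱼ`. -/
def pd2 (f : EuclideanSpace ℝ (Fin 2) → ℝ) (i j : Fin 2) (x : EuclideanSpace ℝ (Fin 2)) : ℝ :=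
  fderiv ℝ (fun y => pd f j y) x (EuclideanSpace.single i 1)

/-- `|∇f(x)|²`. -/
def grad2 (f : EuclideanSpace ℝ (Fin 2) → ℝ) (x : EuclideanSpace ℝ (Fin 2)) : ℝ :=
  ∑ i, (pd f i x) ^ 2

/-- `|D²f(x)|²` (squared Frobenius norm of the Hessian). -/
def hess2 (f : EuclideanSpace ℝ (Fin 2) → ℝ) (x : EuclideanSpace ℝ (Fin 2)) : ℝ :=
  ∑ i, ∑ j, (pd2 f i j x) ^ 2

lemma hasDerivAt_primitive (k : ℝ → ℝ) (hk : Continuous k) (c t : ℝ) :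
    HasDerivAt (fun t => ∫ z in c..t, k z) (k t) t :=
  intervalIntegral.integral_hasDerivAt_right (hk.intervalIntegrable _ _)
    (hk.stronglyMeasurableAtFilter _ _) hk.continuousAt

lemma strictMono_primitive (k : ℝ → ℝ) (hk : Continuous k) (hpos : ∀ t, 0 < k t) (c : ℝ) :
    StrictMono (fun t => ∫ z in c..t, k z) :=
  strictMono_of_hasDerivAt_pos (fun t => hasDerivAt_primitive k hk c t) hpos

lemma hasDerivAt_transport (k : ℝ → ℝ) (hk : Continuous k) (hpos : ∀ t, 0 < k t) (c : ℝ)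
    (T q : ℝ → ℝ) (q' : ℝ → ℝ) (hq : ∀ y, HasDerivAt q (q' y) y)
    (hT : ∀ y, ∫ z in c..(T y), k z = q y) :
    Continuous T ∧ ∀ y, HasDerivAt T (q' y / k (T y)) y := by
  set f : ℝ → ℝ := fun t => ∫ z in c..t, k z with hf
  have hfd : ∀ t, HasDerivAt f (k t) t := fun t => hasDerivAt_primitive k hk c t
  have hfm : StrictMono f := strictMono_primitive k hk hpos c
  have hfc : Continuous f := continuous_iff_continuousAt.2 fun t => (hfd t).continuousAt
  have hemb : Topology.IsEmbedding f :=
    hfm.isEmbedding_of_ordConnected (isPreconnected_range hfc).ordConnected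
  have hqc : Continuous q := continuous_iff_continuousAt.2 fun t => (hq t).continuousAt
  have hfT : f ∘ T = q := funext hT
  have hTc : Continuous T := by
    rw [hemb.continuous_iff, hfT]; exact hqc
  refine ⟨hTc, fun y => ?_⟩
  have hs : HasStrictDerivAt f (k (T y)) (T y) :=
    hasStrictDerivAt_of_hasDerivAt_of_continuousAt (Filter.Eventually.of_forall hfd) hk.continuousAt
  have h1 := hs.to_localInverse (hpos _).ne'
  have h2 := (HasStrictDerivAt.hasStrictFDerivAt_equiv hs (hpos _).ne').eventually_left_inverse
  have h3 := hTc.continuousAt.eventually h2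
  have hqy : f (T y) = q y := hT y
  rw [hqy] at h1
  have h4 := h1.hasDerivAt.comp y (hq y)
  have h5 : (k (T y))⁻¹ * q' y = q' y / k (T y) := by ring
  rw [h5] at h4
  refine h4.congr_of_eventuallyEq ?_
  filter_upwards [h3] with z hz
  rw [← hz]
  have : f (T z) = q z := hT z
  simp only [Function.comp, this]

lemma exists_inv (k : ℝ → ℝ) (hk : Continuous k) (R : ℝ) (hR : 0 < R) (q : ℝ)
    (h0 : 0 ≤ q) (h1 : q ≤ ∫ z in (-R)..R, k z) :
    ∃ t ∈ Set.Icc (-R) R, ∫ z in (-R)..t, k z = q := by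
  have hfc : Continuous (fun t => ∫ z in (-R)..t, k z) :=
    continuous_iff_continuousAt.2 fun t => (hasDerivAt_primitive k hk _ t).continuousAt
  have := intermediate_value_Icc (by linarith : -R ≤ R) hfc.continuousOn
  have h2 : q ∈ Set.Icc (∫ z in (-R)..(-R), k z) (∫ z in (-R)..R, k z) := by
    simpa using ⟨h0, h1⟩
  obtain ⟨t, ht, h⟩ := this h2
  exact ⟨t, ht, h⟩

lemma eq_zero_of_int (f : ℝ → ℝ) (hf : Continuous f) (hp : ∀ x, 0 ≤ f x) (L : ℝ) (hL : 0 < L)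
    (h : ∫ y in (-L)..L, f y = 0) : ∀ y ∈ Set.Icc (-L) L, f y = 0 := by
  intro y hy
  by_contra hne
  have := intervalIntegral.integral_pos (by linarith : -L < L) hf.continuousOn
    (fun x _ => hp x) ⟨y, hy, lt_of_le_of_ne (hp y) (Ne.symm hne)⟩
  linarith

lemma slice (w w' : ℝ → ℝ) (hw' : Continuous w') (hw : ∀ y, HasDerivAt w (w' y) y)
    (L R : ℝ) (hL : 0 < L) (hR : 0 < R) (hwL : w L = 0) (hwL' : w (-L) = 0)
    (k : ℝ → ℝ) (hk : Continuous k) (hpos : ∀ t, 0 < k t) (τ : ℝ)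
    (hτ : τ * (∫ t in (-R)..R, k t ^ 2) = ∫ y in (-L)..L, w y ^ 4)
    (T : ℝ → ℝ) 
    (hT2 : ∀ y, ∫ t in (-R)..(T y), k t ^ 2 =
      (∫ t in (-R)..R, k t ^ 2) * ((∫ z in (-L)..y, w z ^ 4) / ∫ z in (-L)..L, w z ^ 4)) :
    (τ * (∫ t in (-R)..R, k t) ≤
      (1/2) * (τ * ∫ y in (-L)..L, w y ^ 2) - ∫ y in (-L)..L, w y * w' y * T y) ∧
    ∀ φ : ℝ → ℝ, Continuous φ → 
      ∫ y in (-L)..L, w y ^ 4 * φ (T y) = τ * ∫ t in (-R)..R, k t ^ 2 * φ t := by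
  have hwc : Continuous w := continuous_iff_continuousAt.2 fun t => (hw t).continuousAt
  set a := ∫ t in (-R)..R, k t ^ 2 with ha
  set m := ∫ y in (-L)..L, w y ^ 4 with hm
  have hk2 : Continuous fun t => k t ^ 2 := hk.pow 2
  have hk2p : ∀ t, 0 < k t ^ 2 := fun t => pow_pos (hpos t) 2
  have hapos : 0 < a := intervalIntegral.intervalIntegral_pos_of_pos
    (hk2.intervalIntegrable _ _) hk2p (by linarith)
  have hm0 : 0 ≤ m := intervalIntegral.integral_nonneg (by linarith) fun y _ => by positivity
  rcases hm0.eq_or_lt with hmz | hmpos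
  · have hτ0 : τ = 0 := by
      rcases mul_eq_zero.1 (hτ.trans hmz.symm) with h | h
      · exact h
      · exact absurd h hapos.ne'
    have hwz : ∀ y ∈ Set.Icc (-L) L, w y = 0 := fun y hy => by
      have := eq_zero_of_int _ (hwc.pow 4) (fun x => Even.pow_nonneg (by decide) (w x)) L hL hmz.symm y hy
      simpa using this
    have hu : Set.uIcc (-L) L = Set.Icc (-L) L := Set.uIcc_of_le (by linarith)
    constructor
    · have : ∫ y in (-L)..L, w y * w' y * T y = ∫ y in (-L)..L, (0:ℝ) := by
        apply intervalIntegral.integral_congr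
        intro y hy; rw [hu] at hy; simp [hwz y hy]
      rw [this, hτ0]; simp
    · intro φ hφ
      have : ∫ y in (-L)..L, w y ^ 4 * φ (T y) = ∫ y in (-L)..L, (0:ℝ) := by
        apply intervalIntegral.integral_congr
        intro y hy; rw [hu] at hy; simp [hwz y hy]
      rw [this, hτ0]; simp
  · have hτpos : 0 < τ := by
      by_contra h
      push Not at h
      nlinarith
    have hinv := hasDerivAt_transport (fun t => k t ^ 2) hk2 hk2p (-R) T _ 
      (fun y => a * (w y ^ 4 / m)) (fun y => ((hasDerivAt_primitive (fun z => w z ^ 4)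
        (hwc.pow 4) (-L) y).div_const m).const_mul a) hT2
    obtain ⟨hTc, hTd⟩ := hinv
    set T' : ℝ → ℝ := fun y => a * (w y ^ 4 / m) / k (T y) ^ 2 with hT'
    have hkT : ∀ y, k (T y) ≠ 0 := fun y => (hpos _).ne'
    have hT'c : Continuous T' := by
      refine Continuous.div (by fun_prop) (by fun_prop) fun y => pow_ne_zero 2 (hkT y)
    have hTL : T (-L) = -R := by
      apply (strictMono_primitive _ hk2 hk2p (-R)).injective
      simp [hT2]
    have hTL' : T L = R := by
      apply (strictMono_primitive _ hk2 hk2p (-R)).injective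
      simp only [hT2]
      rw [← hm, div_self hmpos.ne', mul_one]
    have hid : ∀ y, w y ^ 4 = τ * (T' y * k (T y) ^ 2) := by
      intro y
      have : T' y * k (T y) ^ 2 = a * (w y ^ 4 / m) := by
        simp only [hT']; field_simp [hkT y]
      rw [this, ← mul_assoc, hτ]; field_simp
    have hB : ∀ φ : ℝ → ℝ, Continuous φ → 
      ∫ y in (-L)..L, w y ^ 4 * φ (T y) = τ * ∫ t in (-R)..R, k t ^ 2 * φ t := by
      intro φ hφ
      have := intervalIntegral.integral_comp_mul_deriv (a := -L) (b := L) (f := T) (f' := T')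
        (g := fun t => k t ^ 2 * φ t) (fun y _ => hTd y) hT'c.continuousOn (hk2.mul hφ)
      rw [hTL, hTL'] at this
      rw [← this, ← intervalIntegral.integral_const_mul]
      congr 1; ext y
      rw [hid y]; simp only [Function.comp]; ring
    refine ⟨?_, hB⟩
    have hki : Continuous fun t => (k t)⁻¹ := hk.inv₀ fun t => (hpos t).ne'
    have h1 := hB _ hki
    have h2 : ∫ t in (-R)..R, k t ^ 2 * (k t)⁻¹ = ∫ t in (-R)..R, k t := by
      congr 1; ext t; field_simp [(hpos t).ne']
    rw [h2] at h1
    rw [← h1]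
    have hparts : ∫ y in (-L)..L, (2 * w y * w' y * T y + w y ^ 2 * T' y) = 0 := by
      rw [intervalIntegral.integral_eq_sub_of_hasDerivAt (f := fun y => w y ^ 2 * T y)]
      · simp [hwL, hwL']
      · intro y _
        have h : HasDerivAt (fun y => w y ^ 2 * T y) _ y := ((hw y).pow 2).mul (hTd y)
        exact h.congr_deriv (by simp [hT'])
      · apply Continuous.intervalIntegrable; fun_prop
    have hle : ∫ y in (-L)..L, w y ^ 4 * (k (T y))⁻¹ ≤
        ∫ y in (-L)..L, ((1/2) * (τ * w y ^ 2) - w y * w' y * T y + 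
          (1/2) * (2 * w y * w' y * T y + w y ^ 2 * T' y)) := by
      apply intervalIntegral.integral_mono_on (by linarith)
      · apply Continuous.intervalIntegrable
        exact (hwc.pow 4).mul (hki.comp hTc)
      · apply Continuous.intervalIntegrable; fun_prop
      · intro y _
        have hT'0 : 0 ≤ T' y := by
          simp only [hT']; positivity
        have hkp := hpos (T y)
        have e : (w y ^ 2 * (k (T y))⁻¹) ^ 2 = τ * T' y := by
          have := hid y
          field_simp
          linarith
        have e2 : w y ^ 2 * (k (T y))⁻¹ ≤ (τ + T' y) / 2 := by
          apply le_of_sq_le_sq _ (by positivity)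
          rw [e]; nlinarith [sq_nonneg (τ - T' y)]
        have e3 := mul_le_mul_of_nonneg_left e2 (sq_nonneg (w y))
        calc w y ^ 4 * (k (T y))⁻¹ = w y ^ 2 * (w y ^ 2 * (k (T y))⁻¹) := by ring
          _ ≤ _ := e3
          _ = _ := by ring
    refine hle.trans (le_of_eq ?_)
    rw [intervalIntegral.integral_add, intervalIntegral.integral_sub,
      intervalIntegral.integral_const_mul, intervalIntegral.integral_const_mul,
      intervalIntegral.integral_const_mul, hparts]
    · ring
    all_goals (apply Continuous.intervalIntegrable; fun_prop)

/-- Lebesgue measure on `(-L, L]`. -/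
def mu (L : ℝ) : Measure ℝ := volume.restrict (Set.Ioc (-L) L)

instance instFiniteMu (L : ℝ) : IsFiniteMeasure (mu L) := by
  unfold mu; infer_instance

lemma mu_integral (L : ℝ) (hL : 0 < L) (f : ℝ → ℝ) : ∫ x, f x ∂(mu L) = ∫ x in (-L)..L, f x := by
  rw [intervalIntegral.integral_of_le (by linarith)]; rfl

lemma mu_prod (L : ℝ) : (mu L).prod (mu L) =
    (volume : Measure (ℝ × ℝ)).restrict (Set.Ioc (-L) L ×ˢ Set.Ioc (-L) L) := by
  unfold mu; rw [Measure.prod_restrict]; rfl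

lemma cont_integrable (L : ℝ) (F : ℝ × ℝ → ℝ) (hF : Continuous F) :
    Integrable F ((mu L).prod (mu L)) := by
  rw [mu_prod]
  have : IntegrableOn F (Set.Icc (-L) L ×ˢ Set.Icc (-L) L) volume :=
    hF.continuousOn.integrableOn_compact (isCompact_Icc.prod isCompact_Icc)
  exact this.mono_set (Set.prod_mono Set.Ioc_subset_Icc_self Set.Ioc_subset_Icc_self)

lemma iter (L : ℝ) (hL : 0 < L) (F : ℝ × ℝ → ℝ) (hF : Integrable F ((mu L).prod (mu L))) :
    ∫ p, F p ∂((mu L).prod (mu L)) = ∫ x in (-L)..L, ∫ y in (-L)..L, F (x, y) := by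
  rw [integral_prod _ hF, mu_integral L hL]
  congr 1; ext x; rw [mu_integral L hL]

lemma iter_swap (L : ℝ) (hL : 0 < L) (F : ℝ × ℝ → ℝ) (hF : Integrable F ((mu L).prod (mu L))) :
    ∫ p, F p ∂((mu L).prod (mu L)) = ∫ y in (-L)..L, ∫ x in (-L)..L, F (x, y) := by
  rw [integral_prod_symm _ hF, mu_integral L hL]
  congr 1; ext x; rw [mu_integral L hL]

lemma cdf_bounds (f : ℝ → ℝ) (hf : Continuous f) (hp : ∀ x, 0 ≤ f x) (L : ℝ) (hL : 0 < L)
    (hz : ∀ x, L ≤ |x| → f x = 0) (x : ℝ) :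
    0 ≤ ∫ z in (-L)..x, f z ∧ ∫ z in (-L)..x, f z ≤ ∫ z in (-L)..L, f z := by
  have hi : ∀ a b, IntervalIntegrable f volume a b := fun a b => hf.intervalIntegrable _ _
  have hLL : 0 ≤ ∫ z in (-L)..L, f z :=
    intervalIntegral.integral_nonneg (by linarith) fun y _ => hp y
  rcases le_total x (-L) with h | h
  · have : ∫ z in (-L)..x, f z = ∫ z in (-L)..x, (0:ℝ) := by
      apply intervalIntegral.integral_congr
      intro y hy
      rw [Set.uIcc_of_ge h] at hy
      apply hz
      rw [abs_of_neg (by linarith [hy.2])]; linarith [hy.2]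
    rw [this]; simpa using hLL
  · refine ⟨intervalIntegral.integral_nonneg h fun y _ => hp y, ?_⟩
    rcases le_total x L with h' | h'
    · rw [← intervalIntegral.integral_add_adjacent_intervals (hi (-L) x) (hi x L)]
      have : 0 ≤ ∫ z in x..L, f z := intervalIntegral.integral_nonneg h' fun y _ => hp y
      linarith
    · rw [← intervalIntegral.integral_add_adjacent_intervals (hi (-L) L) (hi L x)]
      have : ∫ z in L..x, f z = ∫ z in L..x, (0:ℝ) := by
        apply intervalIntegral.integral_congr
        intro y hy
        rw [Set.uIcc_of_le h'] at hy
        apply hz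
        exact hy.1.trans (le_abs_self y)
      rw [this]; simp

/-- The Knothe transport argument. -/
lemma core (u ux uy : ℝ → ℝ → ℝ) (hu : Continuous (Function.uncurry u))
    (hux : Continuous (Function.uncurry ux)) (huy : Continuous (Function.uncurry uy))
    (dx : ∀ x y, HasDerivAt (fun x => u x y) (ux x y) x)
    (dy : ∀ x y, HasDerivAt (fun y => u x y) (uy x y) y)
    (L R : ℝ) (hL : 0 < L) (hR : 0 < R)
    (hzx : ∀ x y, L ≤ |x| → u x y = 0) (hzy : ∀ x y, L ≤ |y| → u x y = 0)
    (h : ℝ → ℝ → ℝ) (hh : Continuous (Function.uncurry h)) (hpos : ∀ s t, 0 < h s t)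
    (hI : ∫ x in (-L)..L, ∫ y in (-L)..L, u x y ^ 4 =
      ∫ s in (-R)..R, ∫ t in (-R)..R, h s t ^ 2) :
    ∃ (T1 : ℝ → ℝ) (T2 : ℝ × ℝ → ℝ), Measurable T1 ∧ Measurable T2 ∧
      (∀ x, T1 x ∈ Set.Icc (-R) R) ∧ (∀ p, T2 p ∈ Set.Icc (-R) R) ∧
      (∫ s in (-R)..R, ∫ t in (-R)..R, h s t) ≤
        - ∫ p, u p.1 p.2 * (ux p.1 p.2 * T1 p.1 + uy p.1 p.2 * T2 p) ∂((mu L).prod (mu L)) ∧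
      ∫ p, u p.1 p.2 ^ 4 * (T1 p.1 ^ 2 + T2 p ^ 2) ^ 2 ∂((mu L).prod (mu L)) =
        ∫ s in (-R)..R, ∫ t in (-R)..R, h s t ^ 2 * (s ^ 2 + t ^ 2) ^ 2 := by
  have hux_ : ∀ x, Continuous (u x) := fun x => hu.comp (by fun_prop : Continuous fun y => (x, y))
  have hhs_ : ∀ s, Continuous (h s) := fun x => hh.comp (by fun_prop : Continuous fun y => (x, y))
  have hu4 : Continuous (Function.uncurry fun x y => u x y ^ 4) := hu.pow 4
  have hh2 : Continuous (Function.uncurry fun x y => h x y ^ 2) := hh.pow 2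
  set m : ℝ → ℝ := fun x => ∫ y in (-L)..L, u x y ^ 4 with hm
  have hmc : Continuous m :=
    intervalIntegral.continuous_parametric_intervalIntegral_of_continuous' hu4 _ _
  set a : ℝ → ℝ := fun s => ∫ t in (-R)..R, h s t ^ 2 with ha
  have hac : Continuous a :=
    intervalIntegral.continuous_parametric_intervalIntegral_of_continuous' hh2 _ _
  have hapos : ∀ s, 0 < a s := fun s => intervalIntegral.intervalIntegral_pos_of_pos
    (((hhs_ s).pow 2).intervalIntegrable _ _) (fun t => pow_pos (hpos s t) 2) (by linarith)
  have hm0 : ∀ x, 0 ≤ m x := fun x =>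
    intervalIntegral.integral_nonneg (by linarith) fun y _ => by positivity
  have hmz : ∀ x, L ≤ |x| → m x = 0 := fun x hx => by simp [hm, hzx x _ hx]
  have hM := cdf_bounds m hmc hm0 L hL hmz
  have hex1 : ∀ x, ∃ t ∈ Set.Icc (-R) R, ∫ z in (-R)..t, a z = ∫ z in (-L)..x, m z := fun x =>
    exists_inv a hac R hR _ (hM x).1 ((hM x).2.trans hI.le)
  choose T1 hT1b hT1 using hex1
  obtain ⟨hT1c, hT1d⟩ := hasDerivAt_transport a hac hapos (-R) T1 _ m
    (fun x => hasDerivAt_primitive m hmc (-L) x) hT1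
  have hN : ∀ x y, 0 ≤ (∫ z in (-L)..y, u x z ^ 4) ∧ (∫ z in (-L)..y, u x z ^ 4) ≤ m x := 
    fun x y => cdf_bounds _ ((hux_ x).pow 4) (fun z => Even.pow_nonneg (by decide) (u x z)) L hL
      (fun z hz => by simp [hzy x z hz]) y
  have hex2 : ∀ p : ℝ × ℝ, ∃ t ∈ Set.Icc (-R) R, ∫ z in (-R)..t, h (T1 p.1) z ^ 2 = 
      a (T1 p.1) * ((∫ z in (-L)..p.2, u p.1 z ^ 4) / m p.1) := fun p => by
    apply exists_inv _ ((hhs_ _).pow 2) R hR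
    · exact mul_nonneg (hapos _).le (div_nonneg (hN _ _).1 (hm0 _))
    · have := div_le_one_of_le₀ (hN p.1 p.2).2 (hm0 _)
      have := mul_le_mul_of_nonneg_left this (hapos (T1 p.1)).le
      simpa using this
  choose T2 hT2b hT2 using hex2
  have hT2m : Measurable T2 := by
    apply measurable_of_Iic
    intro t
    have : T2 ⁻¹' Set.Iic t = {p : ℝ × ℝ | a (T1 p.1) * ((∫ z in (-L)..p.2, u p.1 z ^ 4) / m p.1)
        ≤ ∫ z in (-R)..t, h (T1 p.1) z ^ 2} := by
      ext p
      simp only [Set.mem_preimage, Set.mem_Iic, Set.mem_ofPred_eq]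
      rw [← hT2 p]
      exact ((strictMono_primitive _ ((hhs_ (T1 p.1)).pow 2)
        (fun t => pow_pos (hpos _ t) 2) (-R)).le_iff_le).symm
    rw [this]
    apply measurableSet_le
    · apply Measurable.mul
      · exact (hac.comp (hT1c.comp continuous_fst)).measurable
      · apply Measurable.div
        · exact (intervalIntegral.continuous_parametric_primitive_of_continuous hu4).measurable
        · exact (hmc.comp continuous_fst).measurable
    · have := intervalIntegral.continuous_parametric_intervalIntegral_of_continuous' 
        (μ := volume) hh2 (-R) t
      exact (this.comp (hT1c.comp continuous_fst)).measurable
  have hsl := fun x => slice (u x) (uy x) (huy.comp (by fun_prop : Continuous fun y => (x, y)))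
    (dy x) L R hL hR (hzy x L (le_abs_self L)) (hzy x (-L) (by rw [abs_neg]; exact le_abs_self L))
    (h (T1 x)) (hhs_ _) (hpos _) (m x / a (T1 x)) (div_mul_cancel₀ _ (hapos _).ne')
    (fun y => T2 (x, y)) (fun y => hT2 (x, y))
  have hT1'c : Continuous fun x => m x / a (T1 x) :=
    hmc.div (hac.comp hT1c) fun x => (hapos _).ne'
  have hTL : T1 (-L) = -R := by
    apply (strictMono_primitive _ hac hapos (-R)).injective
    simp [hT1]
  have hTL' : T1 L = R := by
    apply (strictMono_primitive _ hac hapos (-R)).injective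
    simp only [hT1]
    exact hI
  have hsub : ∀ Φ : ℝ → ℝ, Continuous Φ → 
      ∫ x in (-L)..L, m x / a (T1 x) * Φ (T1 x) = ∫ s in (-R)..R, Φ s := by
    intro Φ hΦ
    have := intervalIntegral.integral_comp_mul_deriv (a := -L) (b := L) (f := T1)
        (g := Φ) (fun y _ => hT1d y) hT1'c.continuousOn hΦ
    rw [hTL, hTL'] at this
    rw [← this]
    congr 1; ext x; simp only [Function.comp]; ring
  have hT2bd : ∀ p, ‖T2 p‖ ≤ R := fun p => abs_le.2 (hT2b p)
  have cu : Continuous fun p : ℝ × ℝ => u p.1 p.2 := hu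
  have cux : Continuous fun p : ℝ × ℝ => ux p.1 p.2 := hux
  have cuy : Continuous fun p : ℝ × ℝ => uy p.1 p.2 := huy
  have i1 : Integrable (fun p : ℝ × ℝ => u p.1 p.2 * ux p.1 p.2 * T1 p.1) 
      ((mu L).prod (mu L)) := cont_integrable L _ (by fun_prop)
  have i2 : Integrable (fun p : ℝ × ℝ => u p.1 p.2 * uy p.1 p.2 * T2 p) 
      ((mu L).prod (mu L)) := by
    refine (cont_integrable L (fun p : ℝ × ℝ => u p.1 p.2 * uy p.1 p.2) (by fun_prop)).mul_bdd
      (c := R) hT2m.aestronglyMeasurable (Filter.Eventually.of_forall hT2bd)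
  have i3 : Integrable (fun p : ℝ × ℝ => (m p.1 / a (T1 p.1)) * u p.1 p.2 ^ 2) 
      ((mu L).prod (mu L)) := cont_integrable L _ 
        ((hT1'c.comp continuous_fst).mul (by fun_prop))
  have i4 : Integrable (fun p : ℝ × ℝ => u p.1 p.2 ^ 4 * (T1 p.1 ^ 2 + T2 p ^ 2) ^ 2) 
      ((mu L).prod (mu L)) := by
    refine (cont_integrable L (fun p : ℝ × ℝ => u p.1 p.2 ^ 4) (by fun_prop)).mul_bdd
      (c := (R ^ 2 + R ^ 2) ^ 2) (Measurable.aestronglyMeasurable ?_) 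
        (Filter.Eventually.of_forall fun p => ?_)
    · have := hT1c.measurable
      fun_prop
    · rw [Real.norm_of_nonneg (by positivity)]
      have e1 : T1 p.1 ^ 2 ≤ R ^ 2 := sq_le_sq' (hT1b _).1 (hT1b _).2
      have e2 : T2 p ^ 2 ≤ R ^ 2 := sq_le_sq' (hT2b _).1 (hT2b _).2
      gcongr
  refine ⟨T1, T2, hT1c.measurable, hT2m, hT1b, hT2b, ?_, ?_⟩
  · have hx : ∫ p, (m p.1 / a (T1 p.1)) * u p.1 p.2 ^ 2 ∂((mu L).prod (mu L)) =
        - 2 * ∫ p, u p.1 p.2 * ux p.1 p.2 * T1 p.1 ∂((mu L).prod (mu L)) := by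
      rw [iter_swap L hL _ i3, iter_swap L hL _ i1, ← intervalIntegral.integral_const_mul]
      congr 1; ext y
      have cy : Continuous fun x => u x y := hu.comp (by fun_prop : Continuous fun x => (x, y))
      have cy' : Continuous fun x => ux x y := hux.comp (by fun_prop : Continuous fun x => (x, y))
      have hparts : ∫ x in (-L)..L, (2 * u x y * ux x y * T1 x + u x y ^ 2 * (m x / a (T1 x)))
          = 0 := by
        rw [intervalIntegral.integral_eq_sub_of_hasDerivAt (f := fun x => u x y ^ 2 * T1 x)]
        · simp [hzx L y (le_abs_self L), hzx (-L) y (by rw [abs_neg]; exact le_abs_self L)]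
        · intro x _
          have h : HasDerivAt (fun x => u x y ^ 2 * T1 x) _ x := ((dx x y).pow 2).mul (hT1d x)
          exact h.congr_deriv (by simp)
        · apply Continuous.intervalIntegrable; fun_prop
      rw [intervalIntegral.integral_add] at hparts
      · rw [← intervalIntegral.integral_const_mul]
        have e1 : ∫ x in (-L)..L, (m x / a (T1 x)) * u x y ^ 2 = 
          ∫ x in (-L)..L, u x y ^ 2 * (m x / a (T1 x)) := by congr 1; ext x; ring
        have e2 : ∫ x in (-L)..L, -2 * (u x y * ux x y * T1 x) = 
          - ∫ x in (-L)..L, 2 * u x y * ux x y * T1 x := by 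
          rw [← intervalIntegral.integral_neg]; congr 1; ext x; ring
        dsimp only
        rw [e1, e2]; linarith
      · apply Continuous.intervalIntegrable; fun_prop
      · apply Continuous.intervalIntegrable; fun_prop
    have hsum : ∫ p, u p.1 p.2 * (ux p.1 p.2 * T1 p.1 + uy p.1 p.2 * T2 p) ∂((mu L).prod (mu L))
        = (∫ p, u p.1 p.2 * ux p.1 p.2 * T1 p.1 ∂((mu L).prod (mu L))) + 
          ∫ p, u p.1 p.2 * uy p.1 p.2 * T2 p ∂((mu L).prod (mu L)) := by
      rw [← integral_add i1 i2]; congr 1; ext p; ring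
    have hΦ : Continuous fun s => ∫ t in (-R)..R, h s t :=
      intervalIntegral.continuous_parametric_intervalIntegral_of_continuous' hh _ _
    have hmain : ∫ x in (-L)..L, m x / a (T1 x) * (∫ t in (-R)..R, h (T1 x) t) ≤
        (1/2) * (∫ p, (m p.1 / a (T1 p.1)) * u p.1 p.2 ^ 2 ∂((mu L).prod (mu L))) - 
          ∫ p, u p.1 p.2 * uy p.1 p.2 * T2 p ∂((mu L).prod (mu L)) := by
      rw [← integral_const_mul, ← integral_sub (i3.const_mul _) i2]
      have i6 : Integrable (fun p : ℝ × ℝ => 1 / 2 * (m p.1 / a (T1 p.1) * u p.1 p.2 ^ 2) -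
        u p.1 p.2 * uy p.1 p.2 * T2 p) ((mu L).prod (mu L)) := (i3.const_mul _).sub i2
      rw [integral_prod _ i6, ← mu_integral L hL]
      have i5 := i6.integral_prod_left
      refine integral_mono_ae ?_ i5 ?_
      · have : Continuous fun x => m x / a (T1 x) * (∫ t in (-R)..R, h (T1 x) t) :=
          hT1'c.mul (hΦ.comp hT1c)
        exact (this.integrableOn_Icc (a := -L) (b := L)).mono_set Set.Ioc_subset_Icc_self
      · filter_upwards [i2.prod_right_ae, (i3.const_mul (1/2)).prod_right_ae] with x hx2 hx3
        refine (hsl x).1.trans (le_of_eq ?_)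
        rw [integral_sub hx3 hx2, mu_integral L hL, mu_integral L hL, 
          intervalIntegral.integral_const_mul, intervalIntegral.integral_const_mul]
    rw [hsub _ hΦ, hx] at hmain
    rw [hsum]; linarith
  · rw [iter L hL _ i4]
    have hΦ : Continuous fun s => ∫ t in (-R)..R, h s t ^ 2 * (s ^ 2 + t ^ 2) ^ 2 := by
      apply intervalIntegral.continuous_parametric_intervalIntegral_of_continuous'
      have := hh2
      exact this.mul (by fun_prop : Continuous fun p : ℝ × ℝ => (p.1 ^ 2 + p.2 ^ 2) ^ 2)
    rw [← hsub _ hΦ]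
    congr 1; ext x
    exact (hsl x).2 (fun t => (T1 x ^ 2 + t ^ 2) ^ 2) (by fun_prop)

lemma cauchy_schwarz {α : Type*} [MeasurableSpace α] (ν : Measure α) (f g : α → ℝ)
    (hf : Integrable (fun x => f x ^ 2) ν) (hg : Integrable (fun x => g x ^ 2) ν)
    (hfg : Integrable (fun x => f x * g x) ν) :
    (∫ x, f x * g x ∂ν) ^ 2 ≤ (∫ x, f x ^ 2 ∂ν) * ∫ x, g x ^ 2 ∂ν := by
  have key : ∀ t : ℝ, 0 ≤ (∫ x, f x ^ 2 ∂ν) * (t * t) + (2 * ∫ x, f x * g x ∂ν) * t +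
      ∫ x, g x ^ 2 ∂ν := by
    intro t
    have h0 : 0 ≤ ∫ x, (t * f x + g x) ^ 2 ∂ν := integral_nonneg fun x => sq_nonneg _
    have e : ∀ x, (t * f x + g x) ^ 2 = (t * t) * f x ^ 2 + (2 * t) * (f x * g x) + g x ^ 2 :=
      fun x => by ring
    simp only [e] at h0
    have i1 : Integrable (fun x => (t * t) * f x ^ 2 + (2 * t) * (f x * g x)) ν :=
      (hf.const_mul _).add (hfg.const_mul _)
    rw [integral_add i1 hg,
      integral_add (hf.const_mul _) (hfg.const_mul _), integral_const_mul, integral_const_mul] at h0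
    linarith
  have := discrim_le_zero key
  unfold discrim at this
  nlinarith

lemma core_cs (u ux uy : ℝ → ℝ → ℝ) (hu : Continuous (Function.uncurry u))
    (hux : Continuous (Function.uncurry ux)) (huy : Continuous (Function.uncurry uy))
    (dx : ∀ x y, HasDerivAt (fun x => u x y) (ux x y) x)
    (dy : ∀ x y, HasDerivAt (fun y => u x y) (uy x y) y)
    (L R : ℝ) (hL : 0 < L) (hR : 0 < R)
    (hzx : ∀ x y, L ≤ |x| → u x y = 0) (hzy : ∀ x y, L ≤ |y| → u x y = 0)
    (h : ℝ → ℝ → ℝ) (hh : Continuous (Function.uncurry h)) (hpos : ∀ s t, 0 < h s t)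
    (hI : ∫ x in (-L)..L, ∫ y in (-L)..L, u x y ^ 4 =
      ∫ s in (-R)..R, ∫ t in (-R)..R, h s t ^ 2) :
    (∫ s in (-R)..R, ∫ t in (-R)..R, h s t) ^ 4 ≤
      ((mu L).prod (mu L)).real {p | u p.1 p.2 ≠ 0} *
      (∫ p, (ux p.1 p.2 ^ 2 + uy p.1 p.2 ^ 2) ∂((mu L).prod (mu L))) ^ 2 *
        ∫ s in (-R)..R, ∫ t in (-R)..R, h s t ^ 2 * (s ^ 2 + t ^ 2) ^ 2 := by
  obtain ⟨T1, T2, hT1m, hT2m, hT1b, hT2b, hJ, hS⟩ := 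
    core u ux uy hu hux huy dx dy L R hL hR hzx hzy h hh hpos hI
  set ν := (mu L).prod (mu L) with hν
  rw [← hS]
  set J := ∫ s in (-R)..R, ∫ t in (-R)..R, h s t with hJdef
  have hJ0 : 0 ≤ J := intervalIntegral.integral_nonneg (by linarith) fun s _ =>
    intervalIntegral.integral_nonneg (by linarith) fun t _ => (hpos s t).le
  have cu : Continuous fun p : ℝ × ℝ => u p.1 p.2 := hu
  have cux : Continuous fun p : ℝ × ℝ => ux p.1 p.2 := hux
  have cuy : Continuous fun p : ℝ × ℝ => uy p.1 p.2 := huy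
  have hTb : ∀ p : ℝ × ℝ, T1 p.1 ^ 2 + T2 p ^ 2 ≤ R ^ 2 + R ^ 2 := fun p => 
    add_le_add (sq_le_sq' (hT1b _).1 (hT1b _).2) (sq_le_sq' (hT2b _).1 (hT2b _).2)
  have hT1m' : Measurable fun p : ℝ × ℝ => T1 p.1 := hT1m.comp measurable_fst
  have hr2 : Measurable fun p : ℝ × ℝ => T1 p.1 ^ 2 + T2 p ^ 2 := by fun_prop
  have hbd : ∀ (F : ℝ × ℝ → ℝ) (G : ℝ × ℝ → ℝ) (C : ℝ), Continuous F → Measurable G →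
      (∀ p, |G p| ≤ C) → Integrable (fun p => F p * G p) ν := fun F G C hF hG hC =>
    (cont_integrable L F hF).mul_bdd (c := C) hG.aestronglyMeasurable 
      (Filter.Eventually.of_forall hC)
  have iE : Integrable (fun p : ℝ × ℝ => u p.1 p.2 ^ 2 * (T1 p.1 ^ 2 + T2 p ^ 2)) ν :=
    hbd _ _ (R ^ 2 + R ^ 2) (by fun_prop) hr2 fun p => by
      rw [abs_of_nonneg (by positivity)]; exact hTb p
  have iS : Integrable (fun p : ℝ × ℝ => u p.1 p.2 ^ 4 * (T1 p.1 ^ 2 + T2 p ^ 2) ^ 2) ν :=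
    hbd _ _ ((R ^ 2 + R ^ 2) ^ 2) (by fun_prop) (by fun_prop) fun p => by
      rw [abs_of_nonneg (by positivity)]
      have := hTb p
      gcongr
  have iD : Integrable (fun p : ℝ × ℝ => ux p.1 p.2 ^ 2 + uy p.1 p.2 ^ 2) ν :=
    cont_integrable L _ (by fun_prop)
  set f : ℝ × ℝ → ℝ := fun p => Real.sqrt (ux p.1 p.2 ^ 2 + uy p.1 p.2 ^ 2) with hf
  set g : ℝ × ℝ → ℝ := fun p => |u p.1 p.2| * Real.sqrt (T1 p.1 ^ 2 + T2 p ^ 2) with hg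
  have hf2 : ∀ p, f p ^ 2 = ux p.1 p.2 ^ 2 + uy p.1 p.2 ^ 2 := fun p => 
    Real.sq_sqrt (by positivity)
  have hg2 : ∀ p, g p ^ 2 = u p.1 p.2 ^ 2 * (T1 p.1 ^ 2 + T2 p ^ 2) := fun p => by
    simp only [hg]
    rw [mul_pow, Real.sq_sqrt (by positivity), sq_abs]
  have ifg : Integrable (fun p => f p * g p) ν := by
    have := hbd (fun p => f p * |u p.1 p.2|) (fun p => Real.sqrt (T1 p.1 ^ 2 + T2 p ^ 2))
      (Real.sqrt (R ^ 2 + R ^ 2)) (by fun_prop) (by fun_prop) fun p => by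
        rw [abs_of_nonneg (Real.sqrt_nonneg _)]
        exact Real.sqrt_le_sqrt (hTb p)
    refine this.congr (Filter.Eventually.of_forall fun p => ?_)
    simp only [hg]; ring
  have h1 : J ≤ ∫ p, f p * g p ∂ν := by
    refine hJ.trans ?_
    rw [← integral_neg]
    have b1 := hbd (fun p : ℝ × ℝ => u p.1 p.2 * ux p.1 p.2) (fun p : ℝ × ℝ => T1 p.1) R (by fun_prop) hT1m'
      fun p => abs_le.2 (hT1b p.1)
    have b2 := hbd (fun p => u p.1 p.2 * uy p.1 p.2) T2 R (by fun_prop) hT2m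
      fun p => abs_le.2 (hT2b p)
    refine integral_mono ?_ ifg fun p => ?_
    · refine (b1.add b2).neg.congr (Filter.Eventually.of_forall fun p => ?_)
      simp only [Pi.add_apply, Pi.neg_apply]; ring
    · have hn : 0 ≤ f p * g p := by simp only [hf, hg]; positivity
      have hsq : (-(u p.1 p.2 * (ux p.1 p.2 * T1 p.1 + uy p.1 p.2 * T2 p))) ^ 2 ≤
          (f p * g p) ^ 2 := by
        rw [mul_pow (f p), hf2, hg2]
        nlinarith [sq_nonneg (u p.1 p.2 * (ux p.1 p.2 * T2 p - uy p.1 p.2 * T1 p.1))]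
      exact le_of_sq_le_sq hsq hn
  have hcs1 := cauchy_schwarz ν f g (by simpa only [hf2] using iD) (by simpa only [hg2] using iE) ifg
  simp only [hf2, hg2] at hcs1
  have hms : MeasurableSet {p : ℝ × ℝ | u p.1 p.2 ≠ 0} := 
    (isOpen_ne_fun cu continuous_const).measurableSet
  set χ : ℝ × ℝ → ℝ := Set.indicator {p : ℝ × ℝ | u p.1 p.2 ≠ 0} 1 with hχ
  have hχ2 : ∀ p, χ p ^ 2 = χ p := fun p => by
    by_cases hp : p ∈ {p : ℝ × ℝ | u p.1 p.2 ≠ 0} <;> simp [hχ, hp]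
  have hχu : ∀ p, χ p * (u p.1 p.2 ^ 2 * (T1 p.1 ^ 2 + T2 p ^ 2)) = 
      u p.1 p.2 ^ 2 * (T1 p.1 ^ 2 + T2 p ^ 2) := fun p => by
    by_cases hp : u p.1 p.2 = 0 <;> simp [hχ, hp]
  have iχ : Integrable χ ν := (integrable_const (1:ℝ)).indicator hms
  have hVχ : ∫ p, χ p ∂ν = ν.real {p | u p.1 p.2 ≠ 0} := integral_indicator_one hms
  have hEE : ∀ p : ℝ × ℝ, (u p.1 p.2 ^ 2 * (T1 p.1 ^ 2 + T2 p ^ 2)) ^ 2 = 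
    u p.1 p.2 ^ 4 * (T1 p.1 ^ 2 + T2 p ^ 2) ^ 2 := fun p => by ring
  have hcs2 := cauchy_schwarz ν χ (fun p => u p.1 p.2 ^ 2 * (T1 p.1 ^ 2 + T2 p ^ 2)) 
    (by simpa only [hχ2] using iχ) (by simpa only [hEE] using iS) (by simpa only [hχu] using iE)
  simp only [hχ2, hχu, hEE, hVχ] at hcs2
  have h2 := (pow_le_pow_left₀ hJ0 h1 2).trans hcs1
  have h3 := pow_le_pow_left₀ (sq_nonneg J) h2 2
  calc J ^ 4 = (J ^ 2) ^ 2 := by ring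
    _ ≤ _ := h3
    _ = (∫ p, (ux p.1 p.2 ^ 2 + uy p.1 p.2 ^ 2) ∂ν) ^ 2 * 
      (∫ p, u p.1 p.2 ^ 2 * (T1 p.1 ^ 2 + T2 p ^ 2) ∂ν) ^ 2 := by rw [mul_pow]
    _ ≤ _ := mul_le_mul_of_nonneg_left hcs2 (sq_nonneg _)
    _ = _ := by ring

/-- The (square root of the) target density. -/
def hT (s t : ℝ) : ℝ := 1 / (1 + (s ^ 2 + t ^ 2) ^ 2)

lemma hT_pos (s t : ℝ) : 0 < hT s t := by unfold hT; positivity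

lemma hT_cont : Continuous (Function.uncurry hT) := by
  have : Function.uncurry hT = fun p : ℝ × ℝ => 1 / (1 + (p.1 ^ 2 + p.2 ^ 2) ^ 2) := by
    ext p; rfl
  rw [this]
  exact Continuous.div (by fun_prop) (by fun_prop) fun p => by positivity

/-- The integral of `hT` over a square. -/
def JR (R : ℝ) : ℝ := ∫ s in (-R)..R, ∫ t in (-R)..R, hT s t

lemma sobolev_R (u ux uy : ℝ → ℝ → ℝ) (hu : Continuous (Function.uncurry u))
    (hux : Continuous (Function.uncurry ux)) (huy : Continuous (Function.uncurry uy))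
    (dx : ∀ x y, HasDerivAt (fun x => u x y) (ux x y) x)
    (dy : ∀ x y, HasDerivAt (fun y => u x y) (uy x y) y)
    (L R : ℝ) (hL : 0 < L) (hR : 0 < R)
    (hzx : ∀ x y, L ≤ |x| → u x y = 0) (hzy : ∀ x y, L ≤ |y| → u x y = 0) :
    4 * JR R ^ 2 * (∫ p, u p.1 p.2 ^ 4 ∂((mu L).prod (mu L))) ≤
      ((mu L).prod (mu L)).real {p | u p.1 p.2 ≠ 0} *
      (∫ p, (ux p.1 p.2 ^ 2 + uy p.1 p.2 ^ 2) ∂((mu L).prod (mu L))) ^ 2 := by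
  have cu : Continuous fun p : ℝ × ℝ => u p.1 p.2 := hu
  have hIit := iter L hL (fun p => u p.1 p.2 ^ 4) (cont_integrable L _ (by fun_prop))
  set I := ∫ p, u p.1 p.2 ^ 4 ∂((mu L).prod (mu L)) with hI
  have hI0 : 0 ≤ I := integral_nonneg fun p => by positivity
  rcases hI0.eq_or_lt with h | hIpos
  · rw [← h]; simp only [mul_zero]; positivity
  have cT : Continuous fun p : ℝ × ℝ => hT p.1 p.2 := hT_cont
  set Z := ∫ s in (-R)..R, ∫ t in (-R)..R, hT s t ^ 2 with hZ
  set S := ∫ s in (-R)..R, ∫ t in (-R)..R, hT s t ^ 2 * (s ^ 2 + t ^ 2) ^ 2 with hS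
  have hZS : Z + S = JR R := by
    have i1 : Integrable (fun p : ℝ × ℝ => hT p.1 p.2 ^ 2) ((mu R).prod (mu R)) :=
      cont_integrable R _ (by fun_prop)
    have i2 : Integrable (fun p : ℝ × ℝ => hT p.1 p.2 ^ 2 * (p.1 ^ 2 + p.2 ^ 2) ^ 2) 
      ((mu R).prod (mu R)) := cont_integrable R _ (by fun_prop)
    have e1 := iter R hR _ i1
    have e2 := iter R hR _ i2
    have e3 := iter R hR _ (cont_integrable R _ cT)
    rw [hZ, hS, JR, ← e1, ← e2, ← e3, ← integral_add i1 i2]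
    congr 1; ext p
    unfold hT
    field_simp
  have hc2 : Continuous (Function.uncurry fun s t => hT s t ^ 2) := hT_cont.pow 2
  have hc3 : Continuous (Function.uncurry hT) := hT_cont
  have slc : ∀ s, Continuous (hT s) := fun s => 
    hc3.comp (by fun_prop : Continuous fun y => (s, y))
  have hZpos : 0 < Z := by
    apply intervalIntegral.intervalIntegral_pos_of_pos _ _ (by linarith)
    · exact (intervalIntegral.continuous_parametric_intervalIntegral_of_continuous'
        hc2 _ _).intervalIntegrable _ _
    · intro s
      exact intervalIntegral.intervalIntegral_pos_of_pos (((slc s).pow 2).intervalIntegrable _ _) 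
        (fun t => pow_pos (hT_pos s t) 2) (by linarith)
  have hS0 : 0 ≤ S := intervalIntegral.integral_nonneg (by linarith) fun s _ =>
    intervalIntegral.integral_nonneg (by linarith) fun t _ => by positivity
  have hJpos : 0 < JR R := by linarith
  set l := (Z / I) ^ ((1:ℝ)/4) with hl
  have hl4 : l ^ 4 = Z / I := by
    rw [hl, ← Real.rpow_natCast, ← Real.rpow_mul (by positivity)]; norm_num
  have hlpos : 0 < l := by positivity
  have key := core_cs (fun x y => l * u x y) (fun x y => l * ux x y) (fun x y => l * uy x y)
    (hu.const_mul l) (hux.const_mul l) (huy.const_mul l) (fun x y => (dx x y).const_mul l)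
    (fun x y => (dy x y).const_mul l) L R hL hR (fun x y hx => by simp [hzx x y hx])
    (fun x y hy => by simp [hzy x y hy]) hT hT_cont hT_pos (by
      simp only [mul_pow, intervalIntegral.integral_const_mul]
      rw [← hIit, hl4]; field_simp; rfl)
  have e1 : {p : ℝ × ℝ | l * u p.1 p.2 ≠ 0} = {p : ℝ × ℝ | u p.1 p.2 ≠ 0} := by
    ext p; simp [hlpos.ne']
  simp only [e1, mul_pow, ← mul_add, integral_const_mul] at key
  set V := ((mu L).prod (mu L)).real {p | u p.1 p.2 ≠ 0}
  set D := ∫ p, (ux p.1 p.2 ^ 2 + uy p.1 p.2 ^ 2) ∂((mu L).prod (mu L))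
  change (JR R) ^ 4 ≤ V * ((l ^ 2) ^ 2 * D ^ 2) * S at key
  have e2 : (l ^ 2) ^ 2 = Z / I := by rw [← hl4]; ring
  rw [e2] at key
  have hVD : 0 ≤ V * D ^ 2 := by positivity
  have e3 : V * (Z / I * D ^ 2) * S * I = V * D ^ 2 * (Z * S) := by field_simp
  have k1 : JR R ^ 4 * I ≤ V * D ^ 2 * (Z * S) := by
    rw [← e3]; exact mul_le_mul_of_nonneg_right key hI0
  have k2 : Z * S ≤ JR R ^ 2 / 4 := by rw [← hZS]; nlinarith [sq_nonneg (Z - S)]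
  have k3 := k1.trans (mul_le_mul_of_nonneg_left k2 hVD)
  have k4 : JR R ^ 2 * (4 * JR R ^ 2 * I) ≤ JR R ^ 2 * (V * D ^ 2) := by linarith
  exact le_of_mul_le_mul_left k4 (by positivity)

lemma int_arctan (R : ℝ) : ∫ r in (0:ℝ)..R, r * (1 / (1 + (r ^ 2) ^ 2)) = Real.arctan (R ^ 2) / 2 := by
  rw [intervalIntegral.integral_eq_sub_of_hasDerivAt (f := fun r => Real.arctan (r ^ 2) / 2)]
  · simp
  · intro r _
    have h : HasDerivAt (fun r : ℝ => Real.arctan (r ^ 2) / 2) _ r := 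
      ((hasDerivAt_pow 2 r).arctan).div_const 2
    exact h.congr_deriv (by simp; ring)
  · apply Continuous.intervalIntegrable
    exact continuous_id.mul (Continuous.div (by fun_prop) (by fun_prop) fun p => by positivity)

lemma JR_ge (R : ℝ) (hR : 0 < R) : Real.pi * Real.arctan (R ^ 2) ≤ JR R := by
  have cT : Continuous fun p : ℝ × ℝ => hT p.1 p.2 := hT_cont
  have e3 := iter R hR _ (cont_integrable R _ cT)
  rw [JR, ← e3, mu_prod]
  set B : Set (ℝ × ℝ) := {p | p.1 ^ 2 + p.2 ^ 2 < R ^ 2} with hB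
  have hBm : MeasurableSet B := (isOpen_lt (by fun_prop) (by fun_prop)).measurableSet
  have hsub : B ⊆ Set.Ioc (-R) R ×ˢ Set.Ioc (-R) R := by
    rintro ⟨x, y⟩ h
    simp only [hB, Set.mem_ofPred_eq] at h
    have h1 := abs_lt.1 (abs_lt_of_sq_lt_sq (by nlinarith [sq_nonneg y] : x ^ 2 < R ^ 2) hR.le)
    have h2 := abs_lt.1 (abs_lt_of_sq_lt_sq (by nlinarith [sq_nonneg x] : y ^ 2 < R ^ 2) hR.le)
    exact ⟨⟨h1.1, h1.2.le⟩, ⟨h2.1, h2.2.le⟩⟩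
  have hInt : IntegrableOn (fun p : ℝ × ℝ => hT p.1 p.2) (Set.Ioc (-R) R ×ˢ Set.Ioc (-R) R) := by
    have := cont_integrable R _ cT
    rwa [mu_prod] at this
  refine le_trans (le_of_eq ?_) (setIntegral_mono_set hInt 
    (Filter.Eventually.of_forall fun p => (hT_pos _ _).le) hsub.eventuallyLE)
  rw [← integral_indicator hBm, ← integral_comp_polarCoord_symm]
  have e : ∀ p ∈ polarCoord.target, p.1 • (B.indicator (fun p : ℝ × ℝ => hT p.1 p.2)) 
      (polarCoord.symm p) = (Set.Ioo 0 R).indicator (fun r => r * (1 / (1 + (r ^ 2) ^ 2))) p.1 * 1 := by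
    rintro ⟨r, θ⟩ hp
    have hr : 0 < r := hp.1
    have h2 : (r * Real.cos θ) ^ 2 + (r * Real.sin θ) ^ 2 = r ^ 2 := by
      have := Real.sin_sq_add_cos_sq θ
      linear_combination r ^ 2 * this
    have h3 : (r * Real.cos θ, r * Real.sin θ) ∈ B ↔ r ∈ Set.Ioo 0 R := by
      simp only [hB, Set.mem_ofPred_eq, h2, Set.mem_Ioo, hr, true_and]
      exact ⟨fun h => lt_of_pow_lt_pow_left₀ 2 hR.le h, fun h => by gcongr⟩
    simp only [polarCoord_symm_apply, smul_eq_mul, mul_one]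
    by_cases hrr : r ∈ Set.Ioo 0 R
    · rw [Set.indicator_of_mem (h3.2 hrr), Set.indicator_of_mem hrr, hT, h2]
    · rw [Set.indicator_of_notMem (fun h => hrr (h3.1 h)), Set.indicator_of_notMem hrr, mul_zero]
  rw [setIntegral_congr_fun polarCoord.open_target.measurableSet e]
  have ht : polarCoord.target = Set.Ioi (0:ℝ) ×ˢ Set.Ioo (-Real.pi) Real.pi := rfl
  rw [ht, Measure.volume_eq_prod, setIntegral_prod_mul (fun r => 
    (Set.Ioo 0 R).indicator (fun r => r * (1 / (1 + (r ^ 2) ^ 2))) r) (fun _ => (1:ℝ))]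
  rw [setIntegral_indicator measurableSet_Ioo]
  have hi : Set.Ioi (0:ℝ) ∩ Set.Ioo 0 R = Set.Ioo 0 R := 
    Set.inter_eq_right.2 fun x hx => hx.1
  rw [hi, ← integral_Ioc_eq_integral_Ioo, ← intervalIntegral.integral_of_le hR.le, int_arctan]
  simp [Real.pi_pos.le]
  ring

lemma sobolev (u ux uy : ℝ → ℝ → ℝ) (hu : Continuous (Function.uncurry u))
    (hux : Continuous (Function.uncurry ux)) (huy : Continuous (Function.uncurry uy))
    (dx : ∀ x y, HasDerivAt (fun x => u x y) (ux x y) x)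
    (dy : ∀ x y, HasDerivAt (fun y => u x y) (uy x y) y)
    (L : ℝ) (hL : 0 < L) 
    (hzx : ∀ x y, L ≤ |x| → u x y = 0) (hzy : ∀ x y, L ≤ |y| → u x y = 0) :
    Real.pi ^ 4 * (∫ p, u p.1 p.2 ^ 4 ∂((mu L).prod (mu L))) ≤
      ((mu L).prod (mu L)).real {p | u p.1 p.2 ≠ 0} *
      (∫ p, (ux p.1 p.2 ^ 2 + uy p.1 p.2 ^ 2) ∂((mu L).prod (mu L))) ^ 2 := by
  set I := ∫ p, u p.1 p.2 ^ 4 ∂((mu L).prod (mu L)) with hI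
  have hI0 : 0 ≤ I := integral_nonneg fun p => by positivity
  have hlim : Filter.Tendsto (fun R : ℝ => 4 * (Real.pi * Real.arctan (R ^ 2)) ^ 2 * I) Filter.atTop
      (nhds (4 * (Real.pi * (Real.pi / 2)) ^ 2 * I)) := by
    have h1 : Filter.Tendsto (fun R : ℝ => Real.arctan (R ^ 2)) Filter.atTop 
        (nhds (Real.pi / 2)) :=
      (Real.tendsto_arctan_atTop.mono_right nhdsWithin_le_nhds).comp
        (Filter.tendsto_pow_atTop (by norm_num))
    exact (((h1.const_mul _).pow 2).const_mul 4).mul_const I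
  have e : 4 * (Real.pi * (Real.pi / 2)) ^ 2 * I = Real.pi ^ 4 * I := by ring
  rw [← e]
  refine le_of_tendsto hlim ?_
  filter_upwards [Filter.eventually_gt_atTop 0] with R hR
  refine le_trans ?_ (sobolev_R u ux uy hu hux huy dx dy L R hL hR hzx hzy)
  have h1 := JR_ge R hR
  have h2 : 0 ≤ Real.arctan (R ^ 2) := by
    rw [← Real.arctan_zero]; exact Real.arctan_strictMono.monotone (by positivity)
  have h3 := Real.pi_pos
  gcongr

/-- The plane as a product. -/
def psi : EuclideanSpace ℝ (Fin 2) ≃ᵐ ℝ × ℝ :=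
  (MeasurableEquiv.toLp 2 (Fin 2 → ℝ)).symm.trans MeasurableEquiv.finTwoArrow

lemma psi_mp : MeasurePreserving psi volume volume :=
  (PiLp.volume_preserving_ofLp (Fin 2)).trans (volume_preserving_finTwoArrow ℝ)

/-- The point with coordinates `p`. -/
def ee (p : ℝ × ℝ) : EuclideanSpace ℝ (Fin 2) :=
  p.1 • EuclideanSpace.single 0 1 + p.2 • EuclideanSpace.single 1 1

lemma ee_cont : Continuous ee := by unfold ee; fun_prop

lemma ee_psi (x : EuclideanSpace ℝ (Fin 2)) : ee (psi x) = x := by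
  have h1 : (psi x).1 = x 0 := rfl
  have h2 : (psi x).2 = x 1 := rfl
  unfold ee
  rw [h1, h2]
  ext i
  fin_cases i <;> simp

lemma psi_ee (p : ℝ × ℝ) : psi (ee p) = p := by
  have h1 : (psi (ee p)).1 = ee p 0 := rfl
  have h2 : (psi (ee p)).2 = ee p 1 := rfl
  ext
  · rw [h1]; simp [ee]
  · rw [h2]; simp [ee]

lemma int_ee (F : EuclideanSpace ℝ (Fin 2) → ℝ) : ∫ x, F x = ∫ p : ℝ × ℝ, F (ee p) := by
  rw [← psi_mp.integral_comp' (fun p => F (ee p))]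
  simp only [ee_psi]

lemma scalar (Ω : Set (EuclideanSpace ℝ (Fin 2))) (hΩ : IsOpen Ω)
    (hbdd : Bornology.IsBounded Ω)
    (f : EuclideanSpace ℝ (Fin 2) → ℝ) (hf : ContDiff ℝ 1 f)
    (hsub : tsupport f ⊆ Ω) :
    Real.pi ^ 4 * (∫ x, f x ^ 4) ≤ (volume Ω).toReal * (∫ x, grad2 f x) ^ 2 := by
  obtain ⟨L0, hL0⟩ := hbdd.exists_norm_le
  set L := max L0 0 + 1 with hLdef
  have hL : 0 < L := by positivity
  have hnorm : ∀ x ∈ Ω, ‖x‖ < L := fun x hx => 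
    lt_of_le_of_lt ((hL0 x hx).trans (le_max_left _ 0)) (lt_add_one _)
  have hco : ∀ (x : EuclideanSpace ℝ (Fin 2)) i, |x i| ≤ ‖x‖ := fun x i => 
    PiLp.norm_apply_le x i
  have hout : ∀ p : ℝ × ℝ, (L ≤ |p.1| ∨ L ≤ |p.2|) → ee p ∉ tsupport f := by
    intro p hp hmem
    have hn := hnorm _ (hsub hmem)
    have h1 : ee p 0 = p.1 := by simp [ee]
    have h2 : ee p 1 = p.2 := by simp [ee]
    have h3 := hco (ee p) 0
    have h4 := hco (ee p) 1
    rw [h1] at h3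
    rw [h2] at h4
    rcases hp with hp | hp <;> linarith
  have hfd : Differentiable ℝ f := hf.differentiable (by norm_num)
  have hpdc : ∀ i, Continuous (pd f i) := fun i =>
    (hf.continuous_fderiv (by norm_num)).clm_apply continuous_const
  have hpd0 : ∀ i x, x ∉ tsupport f → pd f i x = 0 := fun i x hx => by
    have : fderiv ℝ f x = 0 := by
      by_contra h
      exact hx (support_fderiv_subset ℝ h)
    simp [pd, this]
  have hf0 : ∀ x, x ∉ tsupport f → f x = 0 := fun x hx => image_eq_zero_of_notMem_tsupport hx
  have key := sobolev (fun x y => f (ee (x, y))) (fun x y => pd f 0 (ee (x, y)))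
    (fun x y => pd f 1 (ee (x, y))) (hf.continuous.comp ee_cont) ((hpdc 0).comp ee_cont)
    ((hpdc 1).comp ee_cont) 
    (fun x y => by
      have h1 : HasDerivAt (fun x : ℝ => ee (x, y)) (EuclideanSpace.single 0 1) x := by
        simpa [ee] using ((hasDerivAt_id x).smul_const 
          (EuclideanSpace.single (0 : Fin 2) (1 : ℝ))).add_const (y • EuclideanSpace.single 1 1)
      exact (hfd (ee (x, y))).hasFDerivAt.comp_hasDerivAt x h1)
    (fun x y => by
      have h1 : HasDerivAt (fun y : ℝ => ee (x, y)) (EuclideanSpace.single 1 1) y := by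
        simpa [ee] using ((hasDerivAt_id y).smul_const 
          (EuclideanSpace.single (1 : Fin 2) (1 : ℝ))).const_add (x • EuclideanSpace.single 0 1)
      exact (hfd (ee (x, y))).hasFDerivAt.comp_hasDerivAt y h1)
    L hL (fun x y hx => hf0 _ (hout (x, y) (Or.inl hx)))
    (fun x y hy => hf0 _ (hout (x, y) (Or.inr hy)))
  have hQ : ∀ F : EuclideanSpace ℝ (Fin 2) → ℝ, (∀ x, x ∉ tsupport f → F x = 0) → 
      ∫ p, F (ee p) ∂((mu L).prod (mu L)) = ∫ x, F x := by
    intro F hF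
    rw [int_ee, mu_prod]
    apply setIntegral_eq_integral_of_forall_compl_eq_zero
    intro p hp
    apply hF
    apply hout
    by_contra hcon
    push Not at hcon
    obtain ⟨h1, h2⟩ := hcon
    exact hp ⟨⟨(abs_lt.1 h1).1, (abs_lt.1 h1).2.le⟩, ⟨(abs_lt.1 h2).1, (abs_lt.1 h2).2.le⟩⟩
  have e1 := hQ (fun x => f x ^ 4) fun x hx => by simp [hf0 x hx]
  have e2 := hQ (grad2 f) fun x hx => by simp [grad2, hpd0 _ x hx]
  have e3 : ∀ p, grad2 f (ee p) = pd f 0 (ee p) ^ 2 + pd f 1 (ee p) ^ 2 := fun p => by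
    simp [grad2, Fin.sum_univ_two]
  simp only [e3] at e2
  simp only [Prod.mk.eta] at key
  rw [e1, e2] at key
  refine key.trans (mul_le_mul_of_nonneg_right ?_ (sq_nonneg _))
  have hfin : volume Ω ≠ ⊤ := hbdd.measure_lt_top.ne
  apply ENNReal.toReal_mono hfin
  rw [mu_prod]
  refine (Measure.restrict_apply_le _ _).trans ?_
  rw [← psi_mp.symm.measure_preimage hΩ.measurableSet.nullMeasurableSet]
  apply measure_mono
  intro p hp
  have : psi.symm p = ee p := by rw [MeasurableEquiv.symm_apply_eq, psi_ee]
  change psi.symm p ∈ Ω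
  rw [this]
  by_contra hn
  exact hp (hf0 _ fun h => hn (hsub h))

/-- For `v ∈ H²₀(Ω)` (here a smooth function compactly supported in `Ω`),
`‖∇v‖_{L⁴(Ω)} ≤ (|Ω|^{1/4}/π) ‖D²v‖_{L²(Ω)}`. -/
theorem grad_L4_le (Ω : Set (EuclideanSpace ℝ (Fin 2))) (hΩ : IsOpen Ω)
    (hbdd : Bornology.IsBounded Ω)
    (v : EuclideanSpace ℝ (Fin 2) → ℝ) (hv : ContDiff ℝ (⊤ : ℕ∞) v)
    (hsupp : HasCompactSupport v) (hsub : tsupport v ⊆ Ω) :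
    (∫ x in Ω, (grad2 v x) ^ 2) ^ ((1 : ℝ) / 4) ≤
      (volume Ω).toReal ^ ((1 : ℝ) / 4) / Real.pi * Real.sqrt (∫ x in Ω, hess2 v x) := by
  have hvd : ∀ j, ContDiff ℝ 1 (pd v j) := fun j => by
    have : ContDiff ℝ 1 (fderiv ℝ v) := hv.fderiv_right (by norm_cast)
    exact this.clm_apply contDiff_const
  have hvs : ∀ j, tsupport (pd v j) ⊆ tsupport v := fun j => by
    apply closure_minimal _ (isClosed_tsupport v)
    intro x hx
    apply support_fderiv_subset ℝ
    intro h
    apply hx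
    simp [pd, h]
  have hvc : ∀ j, HasCompactSupport (pd v j) := fun j =>
    hsupp.of_isClosed_subset (isClosed_tsupport _) (hvs j)
  have hv0 : ∀ j x, x ∉ Ω → pd v j x = 0 := fun j x hx =>
    image_eq_zero_of_notMem_tsupport fun h => hx (hsub (hvs j h))
  have hpd2 : ∀ i j x, pd2 v i j x = pd (pd v j) i x := fun i j x => rfl
  have hh0 : ∀ i j x, x ∉ Ω → pd (pd v j) i x = 0 := fun i j x hx => by
    have : fderiv ℝ (pd v j) x = 0 := by
      by_contra h
      exact hx (hsub (hvs j (support_fderiv_subset ℝ h)))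
    simp [pd, this] 
  have hhess : ∀ x, hess2 v x = grad2 (pd v 0) x + grad2 (pd v 1) x := fun x => by
    simp only [hess2, grad2, Fin.sum_univ_two, hpd2]; ring
  have hX : ∫ x in Ω, (grad2 v x) ^ 2 = ∫ x, (grad2 v x) ^ 2 := by
    apply setIntegral_eq_integral_of_forall_compl_eq_zero
    intro x hx
    simp [grad2, hv0 _ x hx]
  have hY : ∫ x in Ω, hess2 v x = ∫ x, hess2 v x := by
    apply setIntegral_eq_integral_of_forall_compl_eq_zero
    intro x hx
    simp [hess2, hpd2, hh0 _ _ x hx]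
  have k0 := scalar Ω hΩ hbdd (pd v 0) (hvd 0) ((hvs 0).trans hsub)
  have k1 := scalar Ω hΩ hbdd (pd v 1) (hvd 1) ((hvs 1).trans hsub)
  have c0 := (hvd 0).continuous
  have c1 := (hvd 1).continuous
  have hIntg : ∀ j, Integrable (grad2 (pd v j)) volume := fun j => by
    have hc : ∀ i, Continuous (pd (pd v j) i) := fun i =>
      ((hvd j).continuous_fderiv (by norm_num)).clm_apply continuous_const
    apply Continuous.integrable_of_hasCompactSupport
    · unfold grad2; fun_prop
    · refine HasCompactSupport.intro (hvc j) fun x hx => ?_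
      have : fderiv ℝ (pd v j) x = 0 := by
        by_contra h
        exact hx (support_fderiv_subset ℝ h)
      simp [grad2, pd, this]
  have hInt : ∀ F : EuclideanSpace ℝ (Fin 2) → ℝ, Continuous F → 
      (∀ x, x ∉ tsupport v → F x = 0) → Integrable F volume := fun F hF h0 =>
    hF.integrable_of_hasCompactSupport (HasCompactSupport.intro hsupp h0)
  have hz : ∀ j x, x ∉ tsupport v → pd v j x = 0 := fun j x hx =>
    image_eq_zero_of_notMem_tsupport fun h => hx (hvs j h)
  have i0 : Integrable (fun x => pd v 0 x ^ 4) volume := 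
    hInt _ (by fun_prop) fun x hx => by simp [hz 0 x hx]
  have i1 : Integrable (fun x => pd v 1 x ^ 4) volume := 
    hInt _ (by fun_prop) fun x hx => by simp [hz 1 x hx]
  have i01 : Integrable (fun x => pd v 0 x ^ 2 * pd v 1 x ^ 2) volume := 
    hInt _ (by fun_prop) fun x hx => by simp [hz 1 x hx]
  have e4 : ∀ (t : ℝ), (t ^ 2) ^ 2 = t ^ 4 := fun t => by ring
  have hcs := cauchy_schwarz volume (fun x => pd v 0 x ^ 2) (fun x => pd v 1 x ^ 2)
    (by simpa only [e4] using i0) (by simpa only [e4] using i1) i01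
  simp only [e4] at hcs
  have hXe : ∫ x, (grad2 v x) ^ 2 = (∫ x, pd v 0 x ^ 4) + 
      2 * (∫ x, pd v 0 x ^ 2 * pd v 1 x ^ 2) + ∫ x, pd v 1 x ^ 4 := by
    rw [← integral_const_mul, ← integral_add i0 (i01.const_mul 2)]
    have i2 : Integrable (fun x => pd v 0 x ^ 4 + 2 * (pd v 0 x ^ 2 * pd v 1 x ^ 2)) volume := 
      i0.add (i01.const_mul 2)
    rw [← integral_add i2 i1]
    congr 1; ext x
    simp only [grad2, Fin.sum_univ_two]; ring
  have hYe : ∫ x, hess2 v x = (∫ x, grad2 (pd v 0) x) + ∫ x, grad2 (pd v 1) x := by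
    rw [← integral_add (hIntg 0) (hIntg 1)]
    congr 1; ext x; exact hhess x
  have hD : ∀ j, 0 ≤ ∫ x, grad2 (pd v j) x := fun j => integral_nonneg fun x => by
    simp only [grad2]; positivity
  have hD0 := hD 0
  have hD1 := hD 1
  have hA0 : 0 ≤ ∫ x, pd v 0 x ^ 4 := integral_nonneg fun x => Even.pow_nonneg (by decide) _
  have hB0 : 0 ≤ ∫ x, pd v 1 x ^ 4 := integral_nonneg fun x => Even.pow_nonneg (by decide) _
  have hV : 0 ≤ (volume Ω).toReal := ENNReal.toReal_nonneg
  have hY0 : 0 ≤ ∫ x, hess2 v x := by rw [hYe]; linarith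
  have hX0 : 0 ≤ ∫ x, (grad2 v x) ^ 2 := integral_nonneg fun x => sq_nonneg _
  have hpi := Real.pi_pos
  have main : Real.pi ^ 4 * (∫ x, (grad2 v x) ^ 2) ≤
      (volume Ω).toReal * (∫ x, hess2 v x) ^ 2 := by
    rw [hXe, hYe]
    generalize (∫ x, pd v 0 x ^ 4) = A at *
    generalize (∫ x, pd v 1 x ^ 4) = B at *
    generalize (∫ x, pd v 0 x ^ 2 * pd v 1 x ^ 2) = C at *
    generalize (∫ x, grad2 (pd v 0) x) = D at *
    generalize (∫ x, grad2 (pd v 1) x) = F at *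
    generalize (volume Ω).toReal = V at *
    have hC : Real.pi ^ 4 * C ≤ V * (D * F) := by
      apply le_of_sq_le_sq _ (by positivity)
      calc (Real.pi ^ 4 * C) ^ 2 = (Real.pi ^ 4) ^ 2 * C ^ 2 := by ring
        _ ≤ (Real.pi ^ 4) ^ 2 * (A * B) := by gcongr
        _ = (Real.pi ^ 4 * A) * (Real.pi ^ 4 * B) := by ring
        _ ≤ (V * D ^ 2) * (V * F ^ 2) := by gcongr
        _ = _ := by ring
    linarith
  rw [hX, hY]
  generalize (∫ x, (grad2 v x) ^ 2) = X at *
  generalize (∫ x, hess2 v x) = Y at *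
  generalize (volume Ω).toReal = V at *
  have hr : 0 ≤ V ^ ((1 : ℝ) / 4) / Real.pi * Real.sqrt Y := by positivity
  rw [← pow_le_pow_iff_left₀ (by positivity) hr (by norm_num : (4 : ℕ) ≠ 0)]
  have q : ∀ t : ℝ, 0 ≤ t → (t ^ ((1 : ℝ) / 4)) ^ 4 = t := fun t ht => by
    rw [← Real.rpow_natCast, ← Real.rpow_mul ht]; norm_num
  have s4 : Real.sqrt Y ^ 4 = Y ^ 2 := by
    rw [← e4, Real.sq_sqrt hY0]
  rw [q X hX0, mul_pow, div_pow, q V hV, s4, div_mul_eq_mul_div, le_div_iff₀ (by positivity)]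
  linarith

end
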